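/- For every angle α and every time t ≥ 0, the projectile position (x(t), y(t)) = (v₀ cos α · t, v₀ sin α · t − (g/2)t²) satisfies y(t) ≤ −(g/(2v₀²))·x(t)² + v₀²/(2g); that is, every trajectory lies on or below the safety parabola y = −(g/(2v₀²))x² + v₀²/(2g). -/

import Mathlib

open Real

/-- Every projectile trajectory `x t = v₀ cos α · t`, `y t = v₀ sin α · t − (g/2)t²`
(with `v₀ > 0`, `g > 0`) lies on or below the safety parabola
`y = −(g/(2v₀²)) x² + v₀²/(2g)`. -/
theorem projectile_below_safety_parabola (v₀ g : ℝ) (hv₀ : 0 < v₀) (hg : 0 < g) :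
    ∀ α : ℝ, ∀ t : ℝ, 0 ≤ t →
      v₀ * Real.sin α * t - g / 2 * t ^ 2 ≤
        -(g / (2 * v₀ ^ 2)) * (v₀ * Real.cos α * t) ^ 2 + v₀ ^ 2 / (2 * g) := by
  intro α t _
  -- Since `cos² α = 1 - sin² α`, the vertical gap to the parabola is a perfect square over `2g`.
  have gap : -(g / (2 * v₀ ^ 2)) * (v₀ * Real.cos α * t) ^ 2 + v₀ ^ 2 / (2 * g)
      - (v₀ * Real.sin α * t - g / 2 * t ^ 2) = (g * Real.sin α * t - v₀) ^ 2 / (2 * g) := by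
    rw [mul_pow, mul_pow, Real.cos_sq']
    field_simp
    ring
  have nonneg : 0 ≤ (g * Real.sin α * t - v₀) ^ 2 / (2 * g) := by positivity
  linarith
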